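/- arXiv:1912.02840 — 2 statements merged into one kernel-verified Lean document; each statement's English description precedes it below -/
import Mathlib

section
/- Consider the map sending an interval representation M(a,b) of Q to the segment γ(a−1, b) of P(Q). This map restricts to a bijection from the set {H(α), C(α) : α an arrow of Q} onto: (a) the set of all boundary edges of P(Q) except γ(0, n+2), if Q is linearly oriented; (b) the set of all boundary edges of P(Q), if Q is not linearly oriented. -/
open scoped Classical

noncomputable section

namespace CambrianA

/-! ### Combinatorics of a type `A_{n+2}` quiver.

Vertices are `1, …, n+2`.  For `1 ≤ i ≤ n+1`, `ε i = true` means that the arrow between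
`i` and `i+1` is oriented `i → i+1` (`i` is *upper-barred*), and `ε i = false` means it is
oriented `(i+1) → i` (`i` is *lower-barred*). -/

/-- `MaxIncr n ε i j` : the path `i → i+1 → ⋯ → j` is a maximal increasing path of `Q`. -/
def MaxIncr (n : ℕ) (ε : ℕ → Bool) (i j : ℕ) : Prop :=
  1 ≤ i ∧ i ≤ j ∧ j ≤ n + 2 ∧ (∀ ℓ, i ≤ ℓ → ℓ < j → ε ℓ = true) ∧
    (i = 1 ∨ ε (i - 1) = false) ∧ (j = n + 2 ∨ ε j = false)

/-- `MaxDecr n ε i j` : the path `i → i-1 → ⋯ → j` is a maximal decreasing path of `Q`. -/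
def MaxDecr (n : ℕ) (ε : ℕ → Bool) (i j : ℕ) : Prop :=
  1 ≤ j ∧ j ≤ i ∧ i ≤ n + 2 ∧ (∀ ℓ, j ≤ ℓ → ℓ < i → ε ℓ = false) ∧
    (i = n + 2 ∨ ε i = true) ∧ (j = 1 ∨ ε (j - 1) = true)

/-- Vertices of the polygon lying on the lower boundary: `0`, `n+2` and lower-barred ones. -/
def LowerVertex (n : ℕ) (ε : ℕ → Bool) (x : ℕ) : Prop :=
  x = 0 ∨ x = n + 2 ∨ (1 ≤ x ∧ x ≤ n + 1 ∧ ε x = false)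

/-- Vertices of the polygon lying on the upper boundary: `0`, `n+2` and upper-barred ones. -/
def UpperVertex (n : ℕ) (ε : ℕ → Bool) (x : ℕ) : Prop :=
  x = 0 ∨ x = n + 2 ∨ (1 ≤ x ∧ x ≤ n + 1 ∧ ε x = true)

/-- `(a,b)` is a lower boundary edge: `a < b` are consecutive lower vertices. -/
def LowerEdge (n : ℕ) (ε : ℕ → Bool) (a b : ℕ) : Prop :=
  LowerVertex n ε a ∧ LowerVertex n ε b ∧ a < b ∧
    ∀ c, LowerVertex n ε c → ¬(a < c ∧ c < b)

/-- `(a,b)` is an upper boundary edge: `a < b` are consecutive upper vertices. -/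
def UpperEdge (n : ℕ) (ε : ℕ → Bool) (a b : ℕ) : Prop :=
  UpperVertex n ε a ∧ UpperVertex n ε b ∧ a < b ∧
    ∀ c, UpperVertex n ε c → ¬(a < c ∧ c < b)

def BoundaryEdge (n : ℕ) (ε : ℕ → Bool) (a b : ℕ) : Prop :=
  LowerEdge n ε a b ∨ UpperEdge n ε a b

/-- `IsHook n ε a lo hi` : the hook of the arrow of `Q` between `a` and `a+1` is the
maximal path supported on the interval `[lo, hi]`.
If `ε a = true` (arrow `a → a+1`, source `a`), the hook is the maximal decreasing path
starting at `a`; if `ε a = false` (arrow `a+1 → a`, source `a+1`), the hook is the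
maximal increasing path starting at `a+1`. -/
def IsHook (n : ℕ) (ε : ℕ → Bool) (a lo hi : ℕ) : Prop :=
  if ε a = true then
    hi = a ∧ 1 ≤ lo ∧ lo ≤ a ∧ (∀ ℓ, lo ≤ ℓ → ℓ < a → ε ℓ = false) ∧
      (lo = 1 ∨ ε (lo - 1) = true)
  else
    lo = a + 1 ∧ a + 1 ≤ hi ∧ hi ≤ n + 2 ∧ (∀ ℓ, a + 1 ≤ ℓ → ℓ < hi → ε ℓ = true) ∧
      (hi = n + 2 ∨ ε hi = false)

/-- `IsCohook n ε a lo hi` : the cohook of the arrow of `Q` between `a` and `a+1` is the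
maximal path supported on the interval `[lo, hi]`, ending at the target of the arrow. -/
def IsCohook (n : ℕ) (ε : ℕ → Bool) (a lo hi : ℕ) : Prop :=
  if ε a = true then
    lo = a + 1 ∧ a + 1 ≤ hi ∧ hi ≤ n + 2 ∧ (∀ ℓ, a + 1 ≤ ℓ → ℓ < hi → ε ℓ = false) ∧
      (hi = n + 2 ∨ ε hi = true)
  else
    hi = a ∧ 1 ≤ lo ∧ lo ≤ a ∧ (∀ ℓ, lo ≤ ℓ → ℓ < a → ε ℓ = true) ∧
      (lo = 1 ∨ ε (lo - 1) = false)

/-- Counterclockwise neighbor `R⁻¹(ℓ)` of the vertex `ℓ` of the polygon `P(Q)`, for the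
cyclic order `0`, lower-barred vertices increasing, `n+2`, upper-barred vertices
decreasing. -/
def Rinv (n : ℕ) (ε : ℕ → Bool) (ℓ : ℕ) : ℕ :=
  if ℓ = n + 2 then sSup ({0} ∪ {x | 1 ≤ x ∧ x ≤ n + 1 ∧ ε x = true})
  else if 1 ≤ ℓ ∧ ℓ ≤ n + 1 ∧ ε ℓ = true then
    sSup ({0} ∪ {x | 1 ≤ x ∧ x < ℓ ∧ ε x = true})
  else
    sInf ({n + 2} ∪ {x | ℓ < x ∧ x ≤ n + 1 ∧ ε x = false})

/-- `γ(i′,j′)` is a pivot of `γ(i,j)`. -/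
def IsPivot (n : ℕ) (ε : ℕ → Bool) (i j i' j' : ℕ) : Prop :=
  (i' = Rinv n ε i ∧ j' = j ∧ Rinv n ε i < j) ∨
    (i' = i ∧ j' = Rinv n ε j ∧ i < Rinv n ε j)

/-! ### Geometry of the polygon `P(Q)`.

The plane is identified with `ℂ`; `p x` is the vertex of the polygon labeled `x`,
for `0 ≤ x ≤ n+2`. -/

/-- The hypotheses on the points `p 0, …, p (n+2)` realizing the polygon `P(Q)`:
strictly increasing `x`-coordinates; `p 0` and `p (n+2)` on a common horizontal line `L`;
upper-barred vertices above `L`, lower-barred vertices below `L`; convex position. -/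
def PolyPts (n : ℕ) (ε : ℕ → Bool) (p : ℕ → ℂ) : Prop :=
  (∀ a b, a < b → b ≤ n + 2 → (p a).re < (p b).re) ∧
    (p (n + 2)).im = (p 0).im ∧
    (∀ i, 1 ≤ i → i ≤ n + 1 →
      (ε i = true → (p 0).im < (p i).im) ∧ (ε i = false → (p i).im < (p 0).im)) ∧
    ∀ i, i ≤ n + 2 → p i ∉ convexHull ℝ (p '' {j | j ≤ n + 2 ∧ j ≠ i})

/-- The line segment `γ(e.1, e.2)` of the polygon. -/
def Seg (p : ℕ → ℂ) (e : ℕ × ℕ) : Set ℂ := segment ℝ (p e.1) (p e.2)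

/-- Two segments cross when they intersect in a point that is not a common endpoint. -/
def Cross (p : ℕ → ℂ) (e f : ℕ × ℕ) : Prop :=
  ∃ z, z ∈ Seg p e ∧ z ∈ Seg p f ∧
    ¬((z = p e.1 ∨ z = p e.2) ∧ (z = p f.1 ∨ z = p f.2))

/-- Slope of the segment `γ(e.1, e.2)`. -/
def slope (p : ℕ → ℂ) (e : ℕ × ℕ) : ℝ :=
  ((p e.2).im - (p e.1).im) / ((p e.2).re - (p e.1).re)

def ValidPair (n : ℕ) (e : ℕ × ℕ) : Prop := e.1 < e.2 ∧ e.2 ≤ n + 2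

/-- A triangulation of `P(Q)`: a maximal collection of pairwise noncrossing segments. -/
def IsTriangulation (n : ℕ) (p : ℕ → ℂ) (T : Finset (ℕ × ℕ)) : Prop :=
  (∀ e ∈ T, ValidPair n e) ∧ (∀ e ∈ T, ∀ f ∈ T, e ≠ f → ¬Cross p e f) ∧
    ∀ e, ValidPair n e → e ∉ T → ∃ f ∈ T, Cross p e f

/-- Cross product of two planar vectors; positive iff `(u, v)` is counterclockwise. -/
def cross2 (u v : ℂ) : ℝ := u.re * v.im - u.im * v.re

/-- Arrows of the adjacency quiver `Q(T)` of a triangulation `T`: `e → f` whenever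
`e` and `f` are sides of a common triangle of `T` and `f` follows `e` going
counterclockwise around that triangle. -/
def TriArrow (p : ℕ → ℂ) (T : Finset (ℕ × ℕ)) (e f : ℕ × ℕ) : Prop :=
  ∃ a b c : ℕ, a < b ∧ b < c ∧ (a, b) ∈ T ∧ (b, c) ∈ T ∧ (a, c) ∈ T ∧
    ((0 < cross2 (p b - p a) (p c - p a) ∧
        ((e = (a, b) ∧ f = (b, c)) ∨ (e = (b, c) ∧ f = (a, c)) ∨
          (e = (a, c) ∧ f = (a, b)))) ∨
      (cross2 (p b - p a) (p c - p a) < 0 ∧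
        ((e = (a, c) ∧ f = (b, c)) ∨ (e = (b, c) ∧ f = (a, b)) ∨
          (e = (a, b) ∧ f = (a, c)))))

/-! ### Representations of `Q` -/

/-- A finite dimensional representation of the quiver `Q` of type `A_{n+2}` over `k`.
The vector spaces are indexed by `ℕ`, and are required to vanish outside the set
`{1, …, n+2}` of vertices of `Q`.  For each `i`, `fwd i : V i → V (i+1)` is the structure
map of the arrow `i → i+1` (it is required to vanish when the arrow is oriented in the
other direction, i.e. `ε i = false`) and `bwd i : V (i+1) → V i` is the structure map of
the arrow `i+1 → i` (required to vanish when `ε i = true`). -/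
structure ARep (k : Type) [Field k] (n : ℕ) (ε : ℕ → Bool) where
  V : ℕ → Type
  [acg : ∀ x, AddCommGroup (V x)]
  [mod : ∀ x, Module k (V x)]
  [fdim : ∀ x, FiniteDimensional k (V x)]
  triv : ∀ x, x = 0 ∨ n + 2 < x → ∀ v : V x, v = 0
  fwd : ∀ i, V i →ₗ[k] V (i + 1)
  bwd : ∀ i, V (i + 1) →ₗ[k] V i
  fwd_zero : ∀ i, ε i = false → fwd i = 0
  bwd_zero : ∀ i, ε i = true → bwd i = 0

attribute [instance] ARep.acg ARep.mod ARep.fdim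

variable {k : Type} [Field k] {n : ℕ} {ε : ℕ → Bool}

/-- Morphisms of representations. -/
@[ext]
structure ARep.Hom (M N : ARep k n ε) where
  app : ∀ x, M.V x →ₗ[k] N.V x
  comm_fwd : ∀ i (v : M.V i), app (i + 1) (M.fwd i v) = N.fwd i (app i v)
  comm_bwd : ∀ i (v : M.V (i + 1)), app i (M.bwd i v) = N.bwd i (app (i + 1) v)

/-- The identity morphism. -/
def ARep.Hom.id (M : ARep k n ε) : M.Hom M :=
  ⟨fun _ => LinearMap.id, fun _ _ => rfl, fun _ _ => rfl⟩

/-- Composition of morphisms. -/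
def ARep.Hom.comp {M N P : ARep k n ε} (g : N.Hom P) (f : M.Hom N) : M.Hom P where
  app x := (g.app x).comp (f.app x)
  comm_fwd i v := by simp only [LinearMap.comp_apply, f.comm_fwd, g.comm_fwd]
  comm_bwd i v := by simp only [LinearMap.comp_apply, f.comm_bwd, g.comm_bwd]

/-- Sum of two morphisms. -/
def ARep.Hom.add {M N : ARep k n ε} (f g : M.Hom N) : M.Hom N where
  app x := f.app x + g.app x
  comm_fwd i v := by
    simp only [LinearMap.add_apply, f.comm_fwd, g.comm_fwd, map_add]
  comm_bwd i v := by
    simp only [LinearMap.add_apply, f.comm_bwd, g.comm_bwd, map_add]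

/-- Scalar multiple of a morphism. -/
def ARep.Hom.smul {M N : ARep k n ε} (c : k) (f : M.Hom N) : M.Hom N where
  app x := c • f.app x
  comm_fwd i v := by simp only [LinearMap.smul_apply, f.comm_fwd, map_smul]
  comm_bwd i v := by simp only [LinearMap.smul_apply, f.comm_bwd, map_smul]

/-- Isomorphism of representations. -/
def ARep.Iso (M N : ARep k n ε) : Prop :=
  ∃ f : M.Hom N, ∀ x, Function.Bijective (f.app x)

/-- The zero representation(s). -/
def ARep.IsZero (M : ARep k n ε) : Prop := ∀ x, ∀ v : M.V x, v = 0

/-- The support of a representation. -/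
def ARep.supp (M : ARep k n ε) : Set ℕ := {x | ∃ v : M.V x, v ≠ 0}

/-- Direct sum of two representations. -/
def ARep.dsum (M N : ARep k n ε) : ARep k n ε where
  V x := M.V x × N.V x
  acg _ := by infer_instance
  mod _ := by infer_instance
  fdim _ := by infer_instance
  triv x hx v := by
    have h1 := M.triv x hx v.1
    have h2 := N.triv x hx v.2
    exact Prod.ext h1 h2
  fwd i := (M.fwd i).prodMap (N.fwd i)
  bwd i := (M.bwd i).prodMap (N.bwd i)
  fwd_zero i h := by
    show (M.fwd i).prodMap (N.fwd i) = 0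
    rw [M.fwd_zero i h, N.fwd_zero i h]
    apply LinearMap.ext; rintro ⟨a, b⟩; simp
  bwd_zero i h := by
    show (M.bwd i).prodMap (N.bwd i) = 0
    rw [M.bwd_zero i h, N.bwd_zero i h]
    apply LinearMap.ext; rintro ⟨a, b⟩; simp

/-- One dimensional space `k` if `P` holds, `0` otherwise (as a submodule of `k`). -/
def fiber (k : Type) [Field k] (P : Prop) : Submodule k k := if P then ⊤ else ⊥

/-- The canonical map `fiber k P → fiber k Q` : "identity" if `P ∧ Q`, zero otherwise. -/
def fiberMap (k : Type) [Field k] (P Q : Prop) : fiber k P →ₗ[k] fiber k Q :=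
  if h : P ∧ Q then
    { toFun := fun v => ⟨(v : k), by
        rw [show fiber k Q = ⊤ from if_pos h.2]; exact Submodule.mem_top⟩
      map_add' := fun _ _ => rfl
      map_smul' := fun _ _ => rfl }
  else 0

/-- The zero representation. -/
def zeroRep (k : Type) [Field k] (n : ℕ) (ε : ℕ → Bool) : ARep k n ε where
  V _ := ↥(fiber k False)
  acg _ := by infer_instance
  mod _ := by infer_instance
  fdim _ := by infer_instance
  triv x _ v := by
    have hfib : fiber k False = ⊥ := if_neg (fun h : False => h.elim)
    obtain ⟨w, hw⟩ := v
    apply Subtype.ext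
    have hb : w ∈ (⊥ : Submodule k k) := hfib ▸ hw
    exact (Submodule.mem_bot k).1 hb
  fwd _ := 0
  bwd _ := 0
  fwd_zero _ _ := rfl
  bwd_zero _ _ := rfl

/-- The condition for a vertex `x` to be in the support of the interval representation
`M(i,j)`. -/
def SuppCond (n i j x : ℕ) : Prop := i ≤ x ∧ x ≤ j ∧ 1 ≤ x ∧ x ≤ n + 2

/-- The interval (string) representation `M(i,j)` of `Q`: one dimensional at each vertex
`x` with `i ≤ x ≤ j`, zero elsewhere, with identity maps on all arrows whose endpoints
both lie in `[i,j]`. -/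
def intervalRep (k : Type) [Field k] (n : ℕ) (ε : ℕ → Bool) (i j : ℕ) : ARep k n ε where
  V x := ↥(fiber k (SuppCond n i j x))
  acg _ := by infer_instance
  mod _ := by infer_instance
  fdim _ := by infer_instance
  triv x hx v := by
    have hP : ¬SuppCond n i j x := by simp only [SuppCond]; omega
    have hfib : fiber k (SuppCond n i j x) = ⊥ := if_neg hP
    obtain ⟨w, hw⟩ := v
    apply Subtype.ext
    have hb : w ∈ (⊥ : Submodule k k) := hfib ▸ hw
    exact (Submodule.mem_bot k).1 hb
  fwd ℓ :=
    if ε ℓ = true then fiberMap k (SuppCond n i j ℓ) (SuppCond n i j (ℓ + 1)) else 0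
  bwd ℓ :=
    if ε ℓ = true then 0 else fiberMap k (SuppCond n i j (ℓ + 1)) (SuppCond n i j ℓ)
  fwd_zero ℓ h := by simp [h]
  bwd_zero ℓ h := by simp [h]

/-- Direct sum of a list of representations. -/
def dsumList (k : Type) [Field k] (n : ℕ) (ε : ℕ → Bool) :
    List (ARep k n ε) → ARep k n ε
  | [] => zeroRep k n ε
  | M :: L => M.dsum (dsumList k n ε L)

/-- Indecomposable representations. -/
def ARep.Indec (M : ARep k n ε) : Prop :=
  ¬M.IsZero ∧ ∀ A B : ARep k n ε, M.Iso (A.dsum B) → A.IsZero ∨ B.IsZero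

/-- `A` is a direct summand of `T`. -/
def ARep.IsSummand (A T : ARep k n ε) : Prop := ∃ B : ARep k n ε, T.Iso (A.dsum B)

/-- A representation is basic when it has no repeated indecomposable direct summand. -/
def ARep.Basic (T : ARep k n ε) : Prop :=
  ∀ A : ARep k n ε, A.Indec → ¬(A.dsum A).IsSummand T

/-- A short exact sequence `0 → B → E → A → 0`. -/
structure SES (B A : ARep k n ε) where
  E : ARep k n ε
  ι : B.Hom E
  π : E.Hom A
  inj : ∀ x, Function.Injective (ι.app x)
  surj : ∀ x, Function.Surjective (π.app x)
  exct : ∀ x (v : E.V x), π.app x v = 0 ↔ ∃ u, ι.app x u = v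

/-- A short exact sequence splits. -/
def SES.Splits {B A : ARep k n ε} (σ : SES B A) : Prop :=
  ∃ r : σ.E.Hom B, ∀ x (v : B.V x), r.app x (σ.ι.app x v) = v

/-- `Ext¹(A, B) = 0` : every short exact sequence `0 → B → E → A → 0` splits. -/
def ExtZero (A B : ARep k n ε) : Prop := ∀ σ : SES B A, σ.Splits

/-- `Ext¹(A,B) ≅ k`, generated by (the class of) a short exact sequence
`0 → B → E → A → 0` with indecomposable middle term `E`: there is a non-split such
sequence `σ` with `σ.E` indecomposable such that every non-split sequence is equivalent
to a nonzero scalar multiple of `σ`. -/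
def ExtOneDimIndecMid (A B : ARep k n ε) : Prop :=
  ∃ σ : SES B A, ¬σ.Splits ∧ σ.E.Indec ∧
    ∀ τ : SES B A, ¬τ.Splits → ∃ c : k, c ≠ 0 ∧
      ∃ φ : σ.E.Hom τ.E, (∀ x, Function.Bijective (φ.app x)) ∧
        (∀ x (v : B.V x), φ.app x (σ.ι.app x v) = τ.ι.app x v) ∧
        (∀ x (v : σ.E.V x), τ.π.app x (φ.app x v) = c • σ.π.app x v)

/-- Almost rigid representations. -/
def AlmostRigid (T : ARep k n ε) : Prop :=
  T.Basic ∧ ∀ A B : ARep k n ε, A.Indec → B.Indec → A.IsSummand T → B.IsSummand T →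
    ExtZero A B ∨ ExtOneDimIndecMid A B

/-- Maximal almost rigid representations. -/
def MaxAlmostRigid (T : ARep k n ε) : Prop :=
  AlmostRigid T ∧ ∀ M : ARep k n ε, ¬M.IsZero → ¬AlmostRigid (T.dsum M)

/-- `f` is a section. -/
def ARep.Hom.IsSection {M N : ARep k n ε} (f : M.Hom N) : Prop :=
  ∃ g : N.Hom M, ∀ x (v : M.V x), g.app x (f.app x v) = v

/-- `f` is a retraction. -/
def ARep.Hom.IsRetraction {M N : ARep k n ε} (f : M.Hom N) : Prop :=
  ∃ g : N.Hom M, ∀ x (v : N.V x), f.app x (g.app x v) = v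

/-- Irreducible morphisms: `f` is neither a section nor a retraction, and in every
factorization `f = g ∘ h` either `h` is a section or `g` is a retraction. -/
def ARep.Hom.Irred {M N : ARep k n ε} (f : M.Hom N) : Prop :=
  ¬f.IsSection ∧ ¬f.IsRetraction ∧
    ∀ (Z : ARep k n ε) (h : M.Hom Z) (g : Z.Hom N),
      (∀ x (v : M.V x), f.app x v = g.app x (h.app x v)) → h.IsSection ∨ g.IsRetraction

/-- Subrepresentations : families of subspaces closed under the structure maps. -/
structure Subrep (M : ARep k n ε) where
  U : ∀ x, Submodule k (M.V x)
  fwd_mem : ∀ i, ∀ v ∈ U i, M.fwd i v ∈ U (i + 1)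
  bwd_mem : ∀ i, ∀ v ∈ U (i + 1), M.bwd i v ∈ U i

/-- The central charge `Z(M) = Σ_{x=1}^{n+2} dim_k(M_x) · (p_x − p_{x−1})`. -/
def charge (p : ℕ → ℂ) (M : ARep k n ε) : ℂ :=
  ∑ x ∈ Finset.Icc 1 (n + 2), (Module.finrank k (M.V x) : ℂ) * (p x - p (x - 1))

/-- The central charge of a subrepresentation. -/
def subCharge (p : ℕ → ℂ) {M : ARep k n ε} (L : Subrep M) : ℂ :=
  ∑ x ∈ Finset.Icc 1 (n + 2), (Module.finrank k (L.U x) : ℂ) * (p x - p (x - 1))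

/-- The representation `F(T) = ⊕_{γ(a,b) ∈ T} M(a+1, b)` attached to a collection `T` of
segments of the polygon `P(Q)`. -/
def FRep (k : Type) [Field k] (n : ℕ) (ε : ℕ → Bool) (T : Finset (ℕ × ℕ)) : ARep k n ε :=
  dsumList k n ε (T.toList.map fun e => intervalRep k n ε (e.1 + 1) e.2)

end CambrianA

namespace CambrianA

theorem aux_supp (k : Type) [Field k] (n : ℕ) (ε : ℕ → Bool) (lo hi : ℕ)
    (h1 : 1 ≤ lo) (h2 : lo ≤ hi) (h3 : hi ≤ n + 2) :
    (intervalRep k n ε lo hi).supp = Set.Icc lo hi := by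
  ext x
  have key : (∃ v : ↥(fiber k (SuppCond n lo hi x)), v ≠ 0) ↔ SuppCond n lo hi x := by
    by_cases hS : SuppCond n lo hi x
    · have hf : fiber k (SuppCond n lo hi x) = ⊤ := if_pos hS
      refine ⟨fun _ => hS, fun _ => ⟨⟨1, by rw [hf]; trivial⟩, fun h => ?_⟩⟩
      exact one_ne_zero (congrArg Subtype.val h)
    · have hf : fiber k (SuppCond n lo hi x) = ⊥ := if_neg hS
      refine ⟨fun ⟨v, hv⟩ => (hv ?_).elim, fun h => (hS h).elim⟩
      apply Subtype.ext
      have hb : (v : k) ∈ (⊥ : Submodule k k) := hf ▸ v.2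
      exact (Submodule.mem_bot k).1 hb
  have : x ∈ (intervalRep k n ε lo hi).supp ↔ SuppCond n lo hi x := key
  rw [this]
  simp only [SuppCond, Set.mem_Icc]
  omega

theorem aux_val (k : Type) [Field k] (n : ℕ) (ε : ℕ → Bool) (lo hi : ℕ)
    (h1 : 1 ≤ lo) (h2 : lo ≤ hi) (h3 : hi ≤ n + 2) :
    sInf (intervalRep k n ε lo hi).supp = lo ∧ sSup (intervalRep k n ε lo hi).supp = hi := by
  rw [aux_supp k n ε lo hi h1 h2 h3]
  exact ⟨csInf_Icc h2, csSup_Icc h2⟩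

theorem aux_re {u v z : ℂ} (h : u.re ≤ v.re) (hz : z ∈ segment ℝ u v) :
    u.re ≤ z.re ∧ z.re ≤ v.re := by
  obtain ⟨a, b, ha, hb, hab, rfl⟩ := hz
  have hb' : b = 1 - a := by linarith
  subst hb'
  simp only [Complex.add_re, Complex.smul_re, smul_eq_mul]
  constructor <;> nlinarith

theorem aux_seg {n : ℕ} {ε : ℕ → Bool} {p : ℕ → ℂ} (hp : PolyPts n ε p) {a b a' b' : ℕ}
    (h : a < b) (hb : b ≤ n + 2) (h' : a' < b') (hb' : b' ≤ n + 2)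
    (e : segment ℝ (p a) (p b) = segment ℝ (p a') (p b')) : a = a' ∧ b = b' := by
  have hm := hp.1
  have l1 := (hm a b h hb).le
  have l2 := (hm a' b' h' hb').le
  have e1 := aux_re l2 (e ▸ left_mem_segment ℝ (p a) (p b))
  have e2 := aux_re l2 (e ▸ right_mem_segment ℝ (p a) (p b))
  have e3 := aux_re l1 (e.symm ▸ left_mem_segment ℝ (p a') (p b'))
  have e4 := aux_re l1 (e.symm ▸ right_mem_segment ℝ (p a') (p b'))
  constructor
  · rcases lt_trichotomy a a' with g | g | g
    · have := hm a a' g (by omega); linarith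
    · exact g
    · have := hm a' a g (by omega); linarith
  · rcases lt_trichotomy b b' with g | g | g
    · have := hm b b' g (by omega); linarith
    · exact g
    · have := hm b' b g (by omega); linarith

theorem aux_bound {n : ℕ} {ε : ℕ → Bool} {a b : ℕ} (h : BoundaryEdge n ε a b) :
    a < b ∧ b ≤ n + 2 := by
  rcases h with ⟨_, h, h', _⟩ | ⟨_, h, h', _⟩
  · unfold LowerVertex at h; omega
  · unfold UpperVertex at h; omega

theorem aux_fwd {n : ℕ} {ε : ℕ → Bool} {a lo hi : ℕ} (h1 : 1 ≤ a) (h2 : a ≤ n + 1)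
    (h : IsHook n ε a lo hi ∨ IsCohook n ε a lo hi) :
    1 ≤ lo ∧ BoundaryEdge n ε (lo - 1) hi ∧ ¬ (lo - 1 = 0 ∧ hi = n + 2) := by
  unfold IsHook IsCohook at h
  cases ha : ε a
  · simp only [ha, Bool.false_eq_true, if_false] at h
    rcases h with ⟨rfl, g1, g2, g3, g4⟩ | ⟨rfl, g1, g2, g3, g4⟩
    · refine ⟨by omega, Or.inl ⟨?_, ?_, by omega, ?_⟩, by omega⟩
      · exact Or.inr (Or.inr ⟨by omega, by omega, by simpa using ha⟩)
      · by_cases hh : hi = n + 2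
        · exact Or.inr (Or.inl hh)
        · exact Or.inr (Or.inr ⟨by omega, by omega, by tauto⟩)
      · rintro c hc ⟨c1, c2⟩
        have := g3 c (by omega) c2
        rcases hc with hc | hc | ⟨_, _, hc⟩
        · omega
        · omega
        · simp [this] at hc
    · refine ⟨g1, Or.inl ⟨?_, ?_, by omega, ?_⟩, by omega⟩
      · by_cases hh : lo = 1
        · exact Or.inl (by omega)
        · exact Or.inr (Or.inr ⟨by omega, by omega, by tauto⟩)
      · exact Or.inr (Or.inr ⟨h1, h2, ha⟩)
      · rintro c hc ⟨c1, c2⟩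
        have := g3 c (by omega) c2
        rcases hc with hc | hc | ⟨_, _, hc⟩
        · omega
        · omega
        · simp [this] at hc
  · simp only [ha, if_true] at h
    rcases h.symm with ⟨rfl, g1, g2, g3, g4⟩ | ⟨rfl, g1, g2, g3, g4⟩
    · refine ⟨by omega, Or.inr ⟨?_, ?_, by omega, ?_⟩, by omega⟩
      · exact Or.inr (Or.inr ⟨by omega, by omega, by simpa using ha⟩)
      · by_cases hh : hi = n + 2
        · exact Or.inr (Or.inl hh)
        · exact Or.inr (Or.inr ⟨by omega, by omega, by tauto⟩)
      · rintro c hc ⟨c1, c2⟩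
        have := g3 c (by omega) c2
        rcases hc with hc | hc | ⟨_, _, hc⟩
        · omega
        · omega
        · simp [this] at hc
    · refine ⟨g1, Or.inr ⟨?_, ?_, by omega, ?_⟩, by omega⟩
      · by_cases hh : lo = 1
        · exact Or.inl (by omega)
        · exact Or.inr (Or.inr ⟨by omega, by omega, by tauto⟩)
      · exact Or.inr (Or.inr ⟨h1, h2, ha⟩)
      · rintro c hc ⟨c1, c2⟩
        have := g3 c (by omega) c2
        rcases hc with hc | hc | ⟨_, _, hc⟩
        · omega
        · omega
        · simp [this] at hc

theorem aux_bwd {n : ℕ} {ε : ℕ → Bool} {x y : ℕ} (h : BoundaryEdge n ε x y)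
    (hne : ¬ (x = 0 ∧ y = n + 2)) :
    ∃ a, 1 ≤ a ∧ a ≤ n + 1 ∧ (IsHook n ε a (x + 1) y ∨ IsCohook n ε a (x + 1) y) := by
  obtain ⟨hxy, hy⟩ := aux_bound h
  rcases h with ⟨v1, v2, _, hc⟩ | ⟨v1, v2, _, hc⟩
  · have hin : ∀ ℓ, x + 1 ≤ ℓ → ℓ < y → ε ℓ = true := by
      intro ℓ l1 l2
      by_contra hcon
      exact hc ℓ (Or.inr (Or.inr ⟨by omega, by omega, by simpa using hcon⟩)) ⟨by omega, l2⟩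
    rcases v1 with rfl | h | ⟨q1, q2, q3⟩
    · rcases v2 with h | h | ⟨r1, r2, r3⟩
      · omega
      · omega
      · refine ⟨y, r1, r2, Or.inr ?_⟩
        simp only [IsCohook, r3, Bool.false_eq_true, if_false]
        exact ⟨by trivial, by omega, by omega, hin, Or.inl (by trivial)⟩
    · omega
    · refine ⟨x, q1, q2, Or.inl ?_⟩
      simp only [IsHook, q3, Bool.false_eq_true, if_false]
      refine ⟨by trivial, by omega, hy, hin, ?_⟩
      rcases v2 with h | h | ⟨r1, r2, r3⟩
      · omega
      · exact Or.inl h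
      · exact Or.inr r3
  · have hin : ∀ ℓ, x + 1 ≤ ℓ → ℓ < y → ε ℓ = false := by
      intro ℓ l1 l2
      by_contra hcon
      exact hc ℓ (Or.inr (Or.inr ⟨by omega, by omega, by simpa using hcon⟩)) ⟨by omega, l2⟩
    rcases v1 with rfl | h | ⟨q1, q2, q3⟩
    · rcases v2 with h | h | ⟨r1, r2, r3⟩
      · omega
      · omega
      · refine ⟨y, r1, r2, Or.inl ?_⟩
        simp only [IsHook, r3, if_true]
        exact ⟨by trivial, by omega, by omega, hin, Or.inl (by trivial)⟩
    · omega
    · refine ⟨x, q1, q2, Or.inr ?_⟩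
      simp only [IsCohook, q3, if_true]
      refine ⟨by trivial, by omega, hy, hin, ?_⟩
      rcases v2 with h | h | ⟨r1, r2, r3⟩
      · omega
      · exact Or.inl h
      · exact Or.inr r3

theorem aux_main (k : Type) [Field k] (n : ℕ) (ε : ℕ → Bool) (p : ℕ → ℂ)
    (hp : PolyPts n ε p) :
    Set.BijOn (fun M : ARep k n ε => segment ℝ (p (sInf M.supp - 1)) (p (sSup M.supp)))
        {M : ARep k n ε | ∃ a, 1 ≤ a ∧ a ≤ n + 1 ∧ ∃ lo hi,
          (IsHook n ε a lo hi ∨ IsCohook n ε a lo hi) ∧ M = intervalRep k n ε lo hi}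
        ({s : Set ℂ | ∃ a b : ℕ, BoundaryEdge n ε a b ∧ s = segment ℝ (p a) (p b)} \
          {segment ℝ (p 0) (p (n + 2))}) := by
  refine ⟨?_, ?_, ?_⟩
  · rintro M ⟨a, h1, h2, lo, hi, h, rfl⟩
    obtain ⟨g1, g2, g3⟩ := aux_fwd h1 h2 h
    obtain ⟨b1, b2⟩ := aux_bound g2
    obtain ⟨e1, e2⟩ := aux_val k n ε lo hi g1 (by omega) b2
    refine ⟨⟨lo - 1, hi, g2, by simp only [e1, e2]⟩, ?_⟩
    intro hs
    simp only [e1, e2, Set.mem_singleton_iff] at hs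
    exact g3 (aux_seg hp b1 b2 (by omega) le_rfl hs)
  · rintro M ⟨a, h1, h2, lo, hi, h, rfl⟩ M' ⟨a', h1', h2', lo', hi', h', rfl⟩ hs
    obtain ⟨g1, g2, g3⟩ := aux_fwd h1 h2 h
    obtain ⟨b1, b2⟩ := aux_bound g2
    obtain ⟨e1, e2⟩ := aux_val k n ε lo hi g1 (by omega) b2
    obtain ⟨g1', g2', g3'⟩ := aux_fwd h1' h2' h'
    obtain ⟨b1', b2'⟩ := aux_bound g2'
    obtain ⟨e1', e2'⟩ := aux_val k n ε lo' hi' g1' (by omega) b2'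
    simp only [e1, e2, e1', e2'] at hs
    obtain ⟨f1, f2⟩ := aux_seg hp b1 b2 b1' b2' hs
    have f3 : lo = lo' := by omega
    rw [f2, f3]
  · rintro s ⟨⟨x, y, hxy, rfl⟩, hs⟩
    obtain ⟨b1, b2⟩ := aux_bound hxy
    have hne : ¬ (x = 0 ∧ y = n + 2) := by
      rintro ⟨rfl, rfl⟩
      exact hs rfl
    obtain ⟨a, h1, h2, h⟩ := aux_bwd hxy hne
    refine ⟨intervalRep k n ε (x + 1) y, ⟨a, h1, h2, x + 1, y, h, rfl⟩, ?_⟩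
    obtain ⟨e1, e2⟩ := aux_val k n ε (x + 1) y (by omega) (by omega) b2
    simp only [e1, e2, Nat.add_sub_cancel]

/-- the map `M(a,b) ↦ γ(a−1, b)` restricts to a bijection from
`{H(α), C(α) : α ∈ Q₁}` onto the set of boundary edges of `P(Q)` minus `γ(0, n+2)` if
`Q` is linearly oriented, and onto the set of all boundary edges otherwise.  (An
interval representation `M(a,b)` is sent to the segment joining the vertices
`sInf(supp) − 1` and `sSup(supp)` of its support.) -/
theorem stmt_5 (k : Type) [Field k] (n : ℕ) (ε : ℕ → Bool) (p : ℕ → ℂ)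
    (hp : PolyPts n ε p) :
    (((∀ i, 1 ≤ i → i ≤ n + 1 → ε i = true) ∨ (∀ i, 1 ≤ i → i ≤ n + 1 → ε i = false)) →
      Set.BijOn (fun M : ARep k n ε => segment ℝ (p (sInf M.supp - 1)) (p (sSup M.supp)))
        {M : ARep k n ε | ∃ a, 1 ≤ a ∧ a ≤ n + 1 ∧ ∃ lo hi,
          (IsHook n ε a lo hi ∨ IsCohook n ε a lo hi) ∧ M = intervalRep k n ε lo hi}
        ({s : Set ℂ | ∃ a b : ℕ, BoundaryEdge n ε a b ∧ s = segment ℝ (p a) (p b)} \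
          {segment ℝ (p 0) (p (n + 2))})) ∧
    (¬((∀ i, 1 ≤ i → i ≤ n + 1 → ε i = true) ∨ (∀ i, 1 ≤ i → i ≤ n + 1 → ε i = false)) →
      Set.BijOn (fun M : ARep k n ε => segment ℝ (p (sInf M.supp - 1)) (p (sSup M.supp)))
        {M : ARep k n ε | ∃ a, 1 ≤ a ∧ a ≤ n + 1 ∧ ∃ lo hi,
          (IsHook n ε a lo hi ∨ IsCohook n ε a lo hi) ∧ M = intervalRep k n ε lo hi}
        {s : Set ℂ | ∃ a b : ℕ, BoundaryEdge n ε a b ∧ s = segment ℝ (p a) (p b)}) := by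
  refine ⟨fun _ => aux_main k n ε p hp, fun hnl => ?_⟩
  have hm := aux_main k n ε p hp
  rwa [Set.sdiff_singleton_eq_self] at hm
  rintro ⟨a, b, hab, hs⟩
  obtain ⟨b1, b2⟩ := aux_bound hab
  obtain ⟨rfl, rfl⟩ := aux_seg hp (by omega) le_rfl b1 b2 hs
  apply hnl
  rcases hab with ⟨_, _, _, hc⟩ | ⟨_, _, _, hc⟩
  · left
    intro i i1 i2
    by_contra hcon
    exact hc i (Or.inr (Or.inr ⟨i1, i2, by simpa using hcon⟩)) ⟨by omega, by omega⟩
  · right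
    intro i i1 i2
    by_contra hcon
    exact hc i (Or.inr (Or.inr ⟨i1, i2, by simpa using hcon⟩)) ⟨by omega, by omega⟩

end CambrianA
end
end

section
/- Let M = M(i,j) and let N be an indecomposable representation of Q whose support strictly contains [i,j]. (1) If there is an irreducible morphism M → N, then N is obtained from M by adding a hook, in one of at most two ways: (a) there is an arrow α: (j+1) → j with H(α) = M(j+1, ℓ) and N = M(i, ℓ); or (b) there is an arrow α: (i−1) → i with H(α) = M(h, i−1) and N = M(h, j). (2) If there is an irreducible morphism N → M, then M is obtained from N by removing a cohook, in one of at most two ways: (a) there is an arrow α: j → (j+1) with C(α) = M(j+1, ℓ) and N = M(i, ℓ); or (b) there is an arrow α: i → (i−1) with C(α) = M(h, i−1) and N = M(h, j). Moreover, every irreducible morphism between indecomposable representations of Q is of one of these forms. -/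
open scoped Classical

noncomputable section

namespace CambrianA

section Helpers

variable {k : Type} [Field k] {n : ℕ} {ε : ℕ → Bool}

/-! ### Linear algebra along the zigzag -/

def pre (M : ARep k n ε) (b : ℕ) (E : Submodule k (M.V (b + 1))) : Submodule k (M.V b) :=
  if ε b = true then E.comap (M.fwd b) else E.map (M.bwd b)

def pull (M : ARep k n ε) (a : ℕ) : (d : ℕ) → Submodule k (M.V (a + d)) → Submodule k (M.V a)
  | 0, E => E
  | d + 1, E => pull M a d (pre M (a + d) E)

theorem pull_vec (M : ARep k n ε) (a : ℕ) : ∀ (d : ℕ) (E : Submodule k (M.V (a + d)))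
    (u : M.V a), u ∈ pull M a d E → ∃ v : ∀ x, M.V x, v a = u ∧ v (a + d) ∈ E ∧
      ∀ x, a ≤ x → x < a + d → (ε x = true → M.fwd x (v x) = v (x + 1)) ∧
        (ε x = false → M.bwd x (v (x + 1)) = v x) := by
  intro d
  induction d with
  | zero =>
    intro E u hu
    refine ⟨Function.update (fun _ => 0) a u, by simp, ?_, fun x h1 h2 => by omega⟩
    simpa [pull] using hu
  | succ d ih =>
    intro E u hu
    obtain ⟨v, hva, hvE, hv⟩ := ih (pre M (a + d) E) u hu
    have key : ∃ w ∈ E, (ε (a + d) = true → M.fwd (a + d) (v (a + d)) = w) ∧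
        (ε (a + d) = false → M.bwd (a + d) w = v (a + d)) := by
      unfold pre at hvE
      by_cases he : ε (a + d) = true
      · rw [if_pos he] at hvE
        exact ⟨_, hvE, fun _ => rfl, fun h => by simp [he] at h⟩
      · rw [if_neg he] at hvE
        obtain ⟨w, hw, hw2⟩ := hvE
        exact ⟨w, hw, fun h => absurd h he, fun _ => hw2⟩
    obtain ⟨w, hwE, hw1, hw2⟩ := key
    refine ⟨Function.update v (a + d + 1) w, ?_, ?_, ?_⟩
    · rw [Function.update_of_ne (by omega)]; exact hva
    · show Function.update v (a + d + 1) w (a + d + 1) ∈ E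
      rw [Function.update_self]; exact hwE
    · intro x hx1 hx2
      rw [Function.update_of_ne (show x ≠ a + d + 1 by omega)]
      by_cases hx : x = a + d
      · subst hx
        rw [Function.update_self]
        exact ⟨hw1, hw2⟩
      · rw [Function.update_of_ne (show x + 1 ≠ a + d + 1 by omega)]
        exact hv x hx1 (by omega)

theorem extend_functional {V W : Type} [AddCommGroup V] [Module k V] [AddCommGroup W] [Module k W]
    (f : V →ₗ[k] W) (E : Submodule k W) (φ : V →ₗ[k] k) (h : ∀ v, f v ∈ E → φ v = 0) :
    ∃ ψ : W →ₗ[k] k, (∀ w ∈ E, ψ w = 0) ∧ ψ.comp f = φ := by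
  let g : V →ₗ[k] (W ⧸ E) := E.mkQ.comp f
  have hg : LinearMap.ker g ≤ LinearMap.ker φ := by
    intro v hv
    apply h
    simpa [g] using hv
  obtain ⟨ψ, hψ⟩ : ∃ ψ : (W ⧸ E) →ₗ[k] k, ψ.comp g = φ := by
    have : φ ∈ LinearMap.range g.dualMap := by
      rw [LinearMap.range_dualMap_eq_dualAnnihilator_ker]
      rw [Submodule.mem_dualAnnihilator]
      exact fun v hv => hg hv
    obtain ⟨ψ, hψ⟩ := this
    exact ⟨ψ, hψ⟩
  refine ⟨ψ.comp E.mkQ, ?_, ?_⟩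
  · intro w hw
    have : E.mkQ w = 0 := by simpa using hw
    simp only [LinearMap.comp_apply, this, map_zero]
  · rw [← hψ]; rfl

theorem pull_fun (M : ARep k n ε) (a : ℕ) : ∀ (d : ℕ) (E : Submodule k (M.V (a + d)))
    (u : M.V a →ₗ[k] k), (∀ w ∈ pull M a d E, u w = 0) →
      ∃ v : ∀ x, M.V x →ₗ[k] k, v a = u ∧ (∀ w ∈ E, v (a + d) w = 0) ∧
      ∀ x, a ≤ x → x < a + d → (ε x = true → (v (x + 1)).comp (M.fwd x) = v x) ∧
        (ε x = false → (v x).comp (M.bwd x) = v (x + 1)) := by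
  intro d
  induction d with
  | zero =>
    intro E u hu
    refine ⟨Function.update (fun _ => 0) a u, by simp, ?_, fun x h1 h2 => by omega⟩
    simpa [pull] using hu
  | succ d ih =>
    intro E u hu
    obtain ⟨v, hva, hvE, hv⟩ := ih (pre M (a + d) E) u hu
    have key : ∃ w : M.V (a + d + 1) →ₗ[k] k, (∀ e ∈ E, w e = 0) ∧
        (ε (a + d) = true → w.comp (M.fwd (a + d)) = (v (a + d))) ∧
        (ε (a + d) = false → (v (a + d)).comp (M.bwd (a + d)) = w) := by
      unfold pre at hvE
      by_cases he : ε (a + d) = true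
      · rw [if_pos he] at hvE
        obtain ⟨ψ, h1, h2⟩ := extend_functional (M.fwd (a + d)) E (v (a + d)) (fun x hx => hvE x hx)
        exact ⟨ψ, h1, fun _ => h2, fun h => by simp [he] at h⟩
      · rw [if_neg he] at hvE
        exact ⟨_, fun e hee => hvE _ ⟨e, hee, rfl⟩, fun h => absurd h he, fun _ => rfl⟩
    obtain ⟨w, hwE, hw1, hw2⟩ := key
    refine ⟨Function.update v (a + d + 1) w, ?_, ?_, ?_⟩
    · rw [Function.update_of_ne (by omega)]; exact hva
    · show ∀ e ∈ E, Function.update v (a + d + 1) w (a + d + 1) e = 0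
      rw [Function.update_self]; exact hwE
    · intro x hx1 hx2
      rw [Function.update_of_ne (show x ≠ a + d + 1 by omega)]
      by_cases hx : x = a + d
      · subst hx
        rw [Function.update_self]
        exact ⟨hw1, hw2⟩
      · rw [Function.update_of_ne (show x + 1 ≠ a + d + 1 by omega)]
        exact hv x hx1 (by omega)

/-- There is an interval starting at `a` that will split off. -/
theorem exists_split (M : ARep k n ε) (a : ℕ) (ha : a ≤ n + 2) (u : M.V a) (hu : u ≠ 0) :
    ∃ d, a + d ≤ n + 2 ∧
      ¬ (pull M a d (if ε (a + d) = true then pre M (a + d) ⊥ else ⊤) ≤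
        pull M a d (if ε (a + d) = true then ⊥ else pre M (a + d) ⊤)) := by
  by_contra hcon
  push Not at hcon
  have key : ∀ d, a + d ≤ n + 3 → pull M a d ⊥ ≤ ⊥ ∧ ⊤ ≤ pull M a d ⊤ := by
    intro d
    induction d with
    | zero => intro _; exact ⟨le_refl _, le_refl _⟩
    | succ d ih =>
      intro hd
      obtain ⟨i1, i2⟩ := ih (by omega)
      have hc := hcon d (by omega)
      show pull M a d (pre M (a + d) ⊥) ≤ ⊥ ∧ ⊤ ≤ pull M a d (pre M (a + d) ⊤)
      by_cases he : ε (a + d) = true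
      · rw [if_pos he, if_pos he] at hc
        refine ⟨hc.trans i1, ?_⟩
        have : pre M (a + d) ⊤ = ⊤ := by simp [pre, he]
        rw [this]; exact i2
      · rw [if_neg he, if_neg he] at hc
        refine ⟨?_, i2.trans hc⟩
        have : pre M (a + d) ⊥ = ⊥ := by simp [pre, he]
        rw [this]; exact i1
  obtain ⟨e, he⟩ : ∃ e, a + e = n + 3 := ⟨n + 3 - a, by omega⟩
  obtain ⟨k1, k2⟩ := key e (by omega)
  have hbt : (⊥ : Submodule k (M.V (a + e))) = ⊤ := by
    symm
    rw [Submodule.eq_bot_iff]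
    intro x _
    exact M.triv _ (by omega) x
  rw [hbt] at k1
  have : u ∈ (⊥ : Submodule k (M.V a)) := k1 (k2 Submodule.mem_top)
  exact hu (by simpa using this)

/-! ### Fibers -/

theorem fiber_mem {P : Prop} (h : P) (c : k) : c ∈ fiber k P := by
  rw [fiber, if_pos h]; exact Submodule.mem_top

theorem fiber_zero {P : Prop} (h : ¬P) (c : fiber k P) : c = 0 := by
  obtain ⟨w, hw⟩ := c
  apply Subtype.ext
  rw [fiber, if_neg h] at hw
  exact (Submodule.mem_bot k).1 hw

theorem fiberMap_coe' (P Q : Prop) (c : fiber k P) :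
    ((fiberMap k P Q c : fiber k Q) : k) = if Q then (c : k) else 0 := by
  by_cases hP : P
  · by_cases hQ : Q
    · rw [fiberMap, dif_pos ⟨hP, hQ⟩, if_pos hQ]; rfl
    · rw [fiberMap, dif_neg (by tauto), if_neg hQ]; rfl
  · rw [fiber_zero hP c, map_zero]
    show (0 : k) = if Q then (0 : k) else 0
    rw [ite_self]

/-- The coordinate of an element of `M(i,j)` at `x`. -/
def ival {i j x : ℕ} : (intervalRep k n ε i j).V x →ₗ[k] k :=
  (fiber k (SuppCond n i j x)).subtype

theorem ival_inj {i j x : ℕ} {c c' : (intervalRep k n ε i j).V x} (h : ival c = ival c') :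
    c = c' := Subtype.ext h

theorem int_zero {i j x : ℕ} (h : ¬SuppCond n i j x) (c : (intervalRep k n ε i j).V x) :
    c = 0 := fiber_zero h c

theorem ival_zero {i j x : ℕ} (h : ¬SuppCond n i j x) (c : (intervalRep k n ε i j).V x) :
    ival c = 0 := by rw [int_zero h c, map_zero]

def ione {i j x : ℕ} (h : SuppCond n i j x) : (intervalRep k n ε i j).V x :=
  (⟨1, fiber_mem h 1⟩ : fiber k (SuppCond n i j x))

theorem ival_ione {i j x : ℕ} (h : SuppCond n i j x) :
    ival (ione h : (intervalRep k n ε i j).V x) = (1 : k) := rfl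

theorem int_fwd {i j ℓ : ℕ} (h : ε ℓ = true) (c : (intervalRep k n ε i j).V ℓ) :
    ival ((intervalRep k n ε i j).fwd ℓ c) = if SuppCond n i j (ℓ + 1) then ival c else 0 := by
  have h1 : (intervalRep k n ε i j).fwd ℓ =
      fiberMap k (SuppCond n i j ℓ) (SuppCond n i j (ℓ + 1)) := if_pos h
  rw [h1]
  exact fiberMap_coe' _ _ c

theorem int_bwd {i j ℓ : ℕ} (h : ε ℓ = false) (c : (intervalRep k n ε i j).V (ℓ + 1)) :
    ival ((intervalRep k n ε i j).bwd ℓ c) = if SuppCond n i j ℓ then ival c else 0 := by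
  have h1 : (intervalRep k n ε i j).bwd ℓ =
      fiberMap k (SuppCond n i j (ℓ + 1)) (SuppCond n i j ℓ) := if_neg (by simp [h])
  rw [h1]
  exact fiberMap_coe' _ _ c

/-- build a morphism checking only the relevant arrows. -/
def mkHom (M N : ARep k n ε) (app : ∀ x, M.V x →ₗ[k] N.V x)
    (hf : ∀ i, ε i = true → ∀ v : M.V i, app (i + 1) (M.fwd i v) = N.fwd i (app i v))
    (hb : ∀ i, ε i = false → ∀ v : M.V (i + 1), app i (M.bwd i v) = N.bwd i (app (i + 1) v)) :
    M.Hom N where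
  app := app
  comm_fwd i v := by
    cases h : ε i with
    | true => exact hf i h v
    | false => simp [M.fwd_zero i h, N.fwd_zero i h]
  comm_bwd i v := by
    cases h : ε i with
    | false => exact hb i h v
    | true => simp [M.bwd_zero i h, N.bwd_zero i h]

def toInt (i j x : ℕ) {V : Type} [AddCommGroup V] [Module k V] (φ : V →ₗ[k] k) :
    V →ₗ[k] (intervalRep k n ε i j).V x :=
  if h : SuppCond n i j x then φ.smulRight (ione h) else 0

theorem toInt_val (i j x : ℕ) {V : Type} [AddCommGroup V] [Module k V] (φ : V →ₗ[k] k) (v : V) :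
    ival (toInt i j x φ v : (intervalRep k n ε i j).V x) =
      if SuppCond n i j x then φ v else 0 := by
  by_cases h : SuppCond n i j x
  · rw [if_pos h, toInt, dif_pos h, LinearMap.smulRight_apply, map_smul, ival_ione, smul_eq_mul, mul_one]
  · rw [if_neg h, toInt, dif_neg h, LinearMap.zero_apply, map_zero]

def fromInt (i j x : ℕ) {V : Type} [AddCommGroup V] [Module k V] (v : V) :
    (intervalRep k n ε i j).V x →ₗ[k] V :=
  (LinearMap.toSpanSingleton k V v).comp ival

theorem fromInt_apply (i j x : ℕ) {V : Type} [AddCommGroup V] [Module k V] (v : V)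
    (c : (intervalRep k n ε i j).V x) : fromInt i j x v c = ival c • v := rfl

/-- Kernel of a morphism. -/
def kerRep {M N : ARep k n ε} (r : M.Hom N) : ARep k n ε where
  V x := ↥(LinearMap.ker (r.app x))
  acg _ := by infer_instance
  mod _ := by infer_instance
  fdim _ := by infer_instance
  triv x hx v := Subtype.ext (M.triv x hx v.1)
  fwd i := (M.fwd i).restrict (p := LinearMap.ker (r.app i)) (q := LinearMap.ker (r.app (i + 1))) (fun v hv => by
    rw [LinearMap.mem_ker] at hv ⊢
    rw [r.comm_fwd, hv, map_zero])
  bwd i := (M.bwd i).restrict (p := LinearMap.ker (r.app (i + 1))) (q := LinearMap.ker (r.app i)) (fun v hv => by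
    rw [LinearMap.mem_ker] at hv ⊢
    rw [r.comm_bwd, hv, map_zero])
  fwd_zero i h := by
    apply LinearMap.ext
    intro v
    apply Subtype.ext
    show M.fwd i v.1 = 0
    rw [M.fwd_zero i h]; rfl
  bwd_zero i h := by
    apply LinearMap.ext
    intro v
    apply Subtype.ext
    show M.bwd i v.1 = 0
    rw [M.bwd_zero i h]; rfl

theorem iso_of_split {M X : ARep k n ε} (hM : M.Indec) (hX : ¬X.IsZero) (s : X.Hom M)
    (r : M.Hom X) (hrs : ∀ x v, r.app x (s.app x v) = v) : M.Iso X := by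
  let G : ∀ x, M.V x →ₗ[k] (kerRep r).V x := fun x =>
    LinearMap.codRestrict (LinearMap.ker (r.app x)) (LinearMap.id - (s.app x).comp (r.app x))
      (fun v => by
        rw [LinearMap.mem_ker]
        show r.app x (v - s.app x (r.app x v)) = 0
        rw [map_sub, hrs, sub_self])
  let F : M.Hom (X.dsum (kerRep r)) :=
    { app := fun x => (r.app x).prod (G x)
      comm_fwd := fun i v => by
        refine Prod.ext ?_ (Subtype.ext ?_)
        · exact r.comm_fwd i v
        · show M.fwd i v - s.app (i + 1) (r.app (i + 1) (M.fwd i v)) =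
            M.fwd i (v - s.app i (r.app i v))
          rw [map_sub, r.comm_fwd, s.comm_fwd]
      comm_bwd := fun i v => by
        refine Prod.ext ?_ (Subtype.ext ?_)
        · exact r.comm_bwd i v
        · show M.bwd i v - s.app i (r.app i (M.bwd i v)) =
            M.bwd i (v - s.app (i + 1) (r.app (i + 1) v))
          rw [map_sub, r.comm_bwd, s.comm_bwd] }
  have hF : M.Iso (X.dsum (kerRep r)) := by
    refine ⟨F, fun x => ⟨?_, ?_⟩⟩
    · intro v w hvw
      have h1 : r.app x v = r.app x w := congrArg Prod.fst hvw
      have h2 : v - s.app x (r.app x v) = w - s.app x (r.app x w) :=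
        congrArg Subtype.val (congrArg Prod.snd hvw)
      rw [h1] at h2
      exact sub_left_injective h2
    · rintro ⟨p, q⟩
      have hq : r.app x q.1 = 0 := q.2
      refine ⟨s.app x p + q.1, Prod.ext ?_ (Subtype.ext ?_)⟩
      · show r.app x (s.app x p + q.1) = p
        rw [map_add, hrs, hq, add_zero]
      · show s.app x p + q.1 - s.app x (r.app x (s.app x p + q.1)) = q.1
        rw [map_add, hrs, hq, add_zero]; abel
  rcases hM.2 _ _ hF with h | h
  · exact absurd h hX
  · refine ⟨r, fun x => ⟨?_, fun w => ⟨_, hrs x w⟩⟩⟩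
    rw [injective_iff_map_eq_zero]
    intro v hv
    exact congrArg Subtype.val (h x ⟨v, hv⟩)

/-- Gabriel's theorem in type `A`. -/
theorem indec_interval (M : ARep k n ε) (hM : M.Indec) :
    ∃ a b, 1 ≤ a ∧ a ≤ b ∧ b ≤ n + 2 ∧ M.Iso (intervalRep k n ε a b) := by
  have hne : ∃ a, ∃ u : M.V a, u ≠ 0 := by
    have := hM.1
    unfold ARep.IsZero at this
    push Not at this
    exact this
  let a := Nat.find hne
  obtain ⟨u0, hu0⟩ : ∃ u : M.V a, u ≠ 0 := Nat.find_spec hne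
  have hmin : ∀ x < a, ∀ v : M.V x, v = 0 := by
    intro x hx v
    by_contra hv
    exact Nat.find_min hne hx ⟨v, hv⟩
  clear_value a
  have ha : 1 ≤ a ∧ a ≤ n + 2 := by
    by_contra h
    exact hu0 (M.triv a (by omega) u0)
  obtain ⟨d, hd, hsp⟩ := exists_split M a ha.2 u0 hu0
  obtain ⟨u, hus, hur⟩ := SetLike.not_le_iff_exists.1 hsp
  obtain ⟨φ, hφu, hφ⟩ : ∃ φ : M.V a →ₗ[k] k, φ u ≠ 0 ∧
      ∀ w ∈ pull M a d (if ε (a + d) = true then ⊥ else pre M (a + d) ⊤), φ w = 0 := by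
    obtain ⟨φ, h1, h2⟩ := Submodule.exists_le_ker_of_notMem hur
    exact ⟨φ, h1, fun w hw => h2 hw⟩
  obtain ⟨v, hva, hvE, hv⟩ := pull_vec M a d _ u hus
  obtain ⟨p, hpa, hpE, hp⟩ := pull_fun M a d _ φ hφ
  refine ⟨a, a + d, ha.1, by omega, hd, ?_⟩
  have hconst : ∀ e, e ≤ d → p (a + e) (v (a + e)) = φ u := by
    intro e
    induction e with
    | zero => intro _; simp only [Nat.add_zero, hpa, hva]
    | succ e ih =>
      intro he
      rw [← ih (by omega)]
      obtain ⟨v1, v2⟩ := hv (a + e) (by omega) (by omega)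
      obtain ⟨p1, p2⟩ := hp (a + e) (by omega) (by omega)
      show p (a + e + 1) (v (a + e + 1)) = _
      cases h : ε (a + e) with
      | true => rw [← v1 h, ← p1 h]; rfl
      | false => rw [← v2 h, ← p2 h]; rfl
  have hS : ∀ x, SuppCond n a (a + d) x ↔ a ≤ x ∧ x ≤ a + d := by
    intro x; unfold SuppCond; omega
  let s : (intervalRep k n ε a (a + d)).Hom M := mkHom _ _
    (fun x => fromInt a (a + d) x (v x))
    (by
      intro i hi c
      rw [fromInt_apply, fromInt_apply, map_smul, int_fwd hi]
      by_cases h1 : SuppCond n a (a + d) i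
      · by_cases h2 : SuppCond n a (a + d) (i + 1)
        · rw [if_pos h2, (hv i ((hS _).1 h1).1 (by have := (hS _).1 h2; omega)).1 hi]
        · have : i = a + d := by rw [hS] at h1 h2; omega
          subst this
          rw [if_pos hi] at hvE
          have : M.fwd (a + d) (v (a + d)) = 0 := by simpa [pre, hi] using hvE
          rw [this, if_neg h2]; simp
      · rw [int_zero h1 c]; simp)
    (by
      intro i hi c
      rw [fromInt_apply, fromInt_apply, map_smul, int_bwd hi]
      by_cases h1 : SuppCond n a (a + d) (i + 1)
      · by_cases h2 : SuppCond n a (a + d) i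
        · rw [if_pos h2, (hv i ((hS _).1 h2).1 (by have := (hS _).1 h1; omega)).2 hi]
        · have : i < a := by rw [hS] at h1 h2; omega
          rw [hmin i this (M.bwd i _), if_neg h2]; simp
      · rw [int_zero h1 c]; simp)
  let r : M.Hom (intervalRep k n ε a (a + d)) := mkHom _ _
    (fun x => toInt a (a + d) x ((φ u)⁻¹ • p x))
    (by
      intro i hi w
      apply ival_inj
      rw [int_fwd hi, toInt_val, toInt_val]
      by_cases h2 : SuppCond n a (a + d) (i + 1)
      · by_cases h1 : SuppCond n a (a + d) i
        · rw [if_pos h2, if_pos h2, if_pos h1,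
            ← (hp i ((hS _).1 h1).1 (by have := (hS _).1 h2; omega)).1 hi]; rfl
        · have : i < a := by rw [hS] at h1 h2; omega
          rw [hmin i this w]; simp
      · rw [if_neg h2, if_neg h2])
    (by
      intro i hi w
      apply ival_inj
      rw [int_bwd hi, toInt_val, toInt_val]
      by_cases h2 : SuppCond n a (a + d) i
      · by_cases h1 : SuppCond n a (a + d) (i + 1)
        · rw [if_pos h2, if_pos h2, if_pos h1,
            ← (hp i ((hS _).1 h2).1 (by have := (hS _).1 h1; omega)).2 hi]; rfl
        · have : i = a + d := by rw [hS] at h1 h2; omega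
          subst this
          rw [if_neg (by simp [hi])] at hpE
          have : p (a + d) (M.bwd (a + d) w) = 0 := by
            apply hpE
            simp [pre, hi]
          rw [if_pos h2, if_pos h2, if_neg h1, LinearMap.smul_apply, this, smul_zero]
      · rw [if_neg h2, if_neg h2])
  refine iso_of_split hM ?_ s r ?_
  · intro h0
    have hc : SuppCond n a (a + d) a := by rw [hS]; omega
    have := congrArg ival (h0 a (ione hc))
    rw [ival_ione, map_zero] at this
    exact one_ne_zero this
  · intro x c
    by_cases hx : SuppCond n a (a + d) x
    · apply ival_inj
      show ival (toInt a (a + d) x ((φ u)⁻¹ • p x) (fromInt a (a + d) x (v x) c)) = _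
      rw [toInt_val, if_pos hx, fromInt_apply, map_smul, LinearMap.smul_apply]
      obtain ⟨h1, h2⟩ := (hS x).1 hx
      obtain ⟨e, rfl⟩ := Nat.exists_eq_add_of_le h1
      rw [hconst e (by omega), smul_eq_mul, smul_eq_mul, inv_mul_cancel₀ hφu, mul_one]
    · rw [int_zero hx c, map_zero, map_zero]

/-! ### Morphisms between interval representations -/

def coef {a b c d : ℕ} (f : (intervalRep k n ε a b).Hom (intervalRep k n ε c d)) (x : ℕ) : k :=
  if h : SuppCond n a b x then ival (f.app x (ione h)) else 0

theorem coef_spec {a b c d : ℕ} (f : (intervalRep k n ε a b).Hom (intervalRep k n ε c d)) (x : ℕ)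
    (v : (intervalRep k n ε a b).V x) : ival (f.app x v) = ival v * coef f x := by
  unfold coef
  split_ifs with h
  · have : v = ival v • ione h := by
      apply ival_inj
      rw [map_smul, ival_ione, smul_eq_mul, mul_one]
    conv_lhs => rw [this, map_smul, map_smul]
    rfl
  · rw [int_zero h v, map_zero, map_zero, mul_zero]

theorem coef_left {a b c d : ℕ} (f : (intervalRep k n ε a b).Hom (intervalRep k n ε c d)) (x : ℕ)
    (h : ¬SuppCond n a b x) : coef f x = 0 := by simp [coef, h]

theorem coef_right {a b c d : ℕ} (f : (intervalRep k n ε a b).Hom (intervalRep k n ε c d)) (x : ℕ)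
    (h : ¬SuppCond n c d x) : coef f x = 0 := by
  unfold coef
  split_ifs
  · exact ival_zero h _
  · rfl

theorem coef_fwd {a b c d : ℕ} (f : (intervalRep k n ε a b).Hom (intervalRep k n ε c d)) (x : ℕ)
    (he : ε x = true) (h : SuppCond n a b x) (h' : SuppCond n c d (x + 1)) :
    coef f (x + 1) = coef f x := by
  by_cases h2 : SuppCond n a b (x + 1)
  · have := congrArg ival (f.comm_fwd x (ione h))
    rw [int_fwd he, coef_spec, coef_spec, if_pos h', int_fwd he, if_pos h2, ival_ione] at this
    simpa using this
  · have := congrArg ival (f.comm_fwd x (ione h))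
    rw [int_fwd he, coef_spec, coef_spec, if_pos h', int_fwd he, if_neg h2, ival_ione] at this
    rw [coef_left f _ h2]
    simpa using this

theorem coef_bwd {a b c d : ℕ} (f : (intervalRep k n ε a b).Hom (intervalRep k n ε c d)) (x : ℕ)
    (he : ε x = false) (h : SuppCond n a b (x + 1)) (h' : SuppCond n c d x) :
    coef f x = coef f (x + 1) := by
  by_cases h2 : SuppCond n a b x
  · have := congrArg ival (f.comm_bwd x (ione h))
    rw [int_bwd he, coef_spec, coef_spec, if_pos h', int_bwd he, if_pos h2, ival_ione] at this
    simpa using this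
  · have := congrArg ival (f.comm_bwd x (ione h))
    rw [int_bwd he, coef_spec, coef_spec, if_pos h', int_bwd he, if_neg h2, ival_ione] at this
    rw [coef_left f _ h2]
    simpa using this

/-- Combinatorial condition for a nonzero map `M(a,b) → M(c,d)`. -/
def Can (ε : ℕ → Bool) (a b c d : ℕ) : Prop :=
  a ≤ d ∧ c ≤ b ∧ (b < d → ε b = false) ∧ (d < b → ε d = true) ∧
    (c < a → ε (a - 1) = true) ∧ (a < c → ε (c - 1) = false)

theorem coef_const {a b c d : ℕ} (f : (intervalRep k n ε a b).Hom (intervalRep k n ε c d))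
    (x e : ℕ) (h : SuppCond n a b x ∧ SuppCond n c d x)
    (h' : SuppCond n a b (x + e) ∧ SuppCond n c d (x + e)) : coef f (x + e) = coef f x := by
  induction e with
  | zero => rfl
  | succ e ih =>
    have hm : SuppCond n a b (x + e) ∧ SuppCond n c d (x + e) := by
      unfold SuppCond at *; omega
    rw [← ih hm]
    cases he : ε (x + e) with
    | true => exact coef_fwd f _ he hm.1 h'.2
    | false => exact (coef_bwd f _ he h'.1 hm.2).symm

theorem coef_const' {a b c d : ℕ} (f : (intervalRep k n ε a b).Hom (intervalRep k n ε c d))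
    (x y : ℕ) (h : SuppCond n a b x ∧ SuppCond n c d x)
    (h' : SuppCond n a b y ∧ SuppCond n c d y) : coef f x = coef f y := by
  rcases le_total x y with hxy | hxy
  · obtain ⟨e, rfl⟩ := Nat.exists_eq_add_of_le hxy
    exact (coef_const f x e h h').symm
  · obtain ⟨e, rfl⟩ := Nat.exists_eq_add_of_le hxy
    exact coef_const f y e h' h

theorem can_of_coef {a b c d : ℕ} (f : (intervalRep k n ε a b).Hom (intervalRep k n ε c d))
    (hab : 1 ≤ a ∧ b ≤ n + 2) (hcd : 1 ≤ c ∧ d ≤ n + 2)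
    (x : ℕ) (hx : coef f x ≠ 0) : Can ε a b c d := by
  have h1 : SuppCond n a b x := by
    by_contra h; exact hx (coef_left f x h)
  have h2 : SuppCond n c d x := by
    by_contra h; exact hx (coef_right f x h)
  have hne : ∀ y, SuppCond n a b y → SuppCond n c d y → coef f y ≠ 0 := by
    intro y ha hc
    rw [coef_const' f y x ⟨ha, hc⟩ ⟨h1, h2⟩]; exact hx
  have hbool : ∀ y, (ε y = true → False) → ε y = false := by
    intro y; cases ε y <;> simp
  have hbool' : ∀ y, (ε y = false → False) → ε y = true := by
    intro y; cases ε y <;> simp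
  unfold SuppCond at h1 h2
  refine ⟨by omega, by omega, ?_, ?_, ?_, ?_⟩
  · intro h
    refine hbool _ fun he => hne b (by unfold SuppCond; omega) (by unfold SuppCond; omega) ?_
    rw [← coef_fwd f b he (by unfold SuppCond; omega) (by unfold SuppCond; omega)]
    exact coef_left f _ (by unfold SuppCond; omega)
  · intro h
    refine hbool' _ fun he => hne d (by unfold SuppCond; omega) (by unfold SuppCond; omega) ?_
    rw [coef_bwd f d he (by unfold SuppCond; omega) (by unfold SuppCond; omega)]
    exact coef_right f _ (by unfold SuppCond; omega)
  · intro h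
    obtain ⟨y, rfl⟩ : ∃ y, a = y + 1 := ⟨a - 1, by omega⟩
    refine hbool' _ fun he => hne (y + 1) (by unfold SuppCond; omega)
      (by unfold SuppCond; omega) ?_
    rw [← coef_bwd f y he (by unfold SuppCond; omega) (by unfold SuppCond; omega)]
    exact coef_left f _ (by unfold SuppCond; omega)
  · intro h
    obtain ⟨y, rfl⟩ : ∃ y, c = y + 1 := ⟨c - 1, by omega⟩
    refine hbool _ fun he => hne (y + 1) (by unfold SuppCond; omega)
      (by unfold SuppCond; omega) ?_
    rw [coef_fwd f y he (by unfold SuppCond; omega) (by unfold SuppCond; omega)]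
    exact coef_right f _ (by unfold SuppCond; omega)

/-- The canonical morphism, scaled by `t`. -/
def canHom (k : Type) [Field k] (n : ℕ) {ε : ℕ → Bool} {a b c d : ℕ} (h : Can ε a b c d) (t : k) :
    (intervalRep k n ε a b).Hom (intervalRep k n ε c d) :=
  mkHom _ _ (fun x => t • toInt c d x ival)
    (by
      intro i hi v
      apply ival_inj
      rw [LinearMap.smul_apply, LinearMap.smul_apply, map_smul]
      rw [map_smul, map_smul]
      congr 1
      rw [toInt_val, int_fwd hi, int_fwd hi, toInt_val]
      by_cases h1 : SuppCond n a b i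
      · by_cases h4 : SuppCond n c d (i + 1)
        · have : SuppCond n a b (i + 1) ↔ SuppCond n c d i := by
            obtain ⟨c1, c2, c3, c4, c5, c6⟩ := h
            unfold SuppCond at *
            constructor
            · intro h2
              by_contra h3
              have : i = c - 1 := by omega
              subst this
              have := c6 (by omega)
              simp [this] at hi
            · intro h2
              by_contra h3
              have : i = b := by omega
              subst this
              have := c3 (by omega)
              simp [this] at hi
          simp only [this]
        · simp [h4]
      · rw [int_zero h1 v]; simp)
    (by
      intro i hi v
      apply ival_inj
      rw [LinearMap.smul_apply, LinearMap.smul_apply, map_smul]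
      rw [map_smul, map_smul]
      congr 1
      rw [toInt_val, int_bwd hi, int_bwd hi, toInt_val]
      by_cases h1 : SuppCond n a b (i + 1)
      · by_cases h4 : SuppCond n c d i
        · have : SuppCond n a b i ↔ SuppCond n c d (i + 1) := by
            obtain ⟨c1, c2, c3, c4, c5, c6⟩ := h
            unfold SuppCond at *
            constructor
            · intro h2
              by_contra h3
              have : i = d := by omega
              subst this
              have := c4 (by omega)
              simp [this] at hi
            · intro h2
              by_contra h3
              have : i = a - 1 := by omega
              subst this
              have := c5 (by omega)
              simp [this] at hi
          simp only [this]
        · simp [h4]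
      · rw [int_zero h1 v]; simp)

theorem canHom_coe {a b c d : ℕ} (h : Can ε a b c d) (t : k) (x : ℕ)
    (v : (intervalRep k n ε a b).V x) :
    ival ((canHom k n h t).app x v) = t * if SuppCond n c d x then ival v else 0 := by
  rw [← toInt_val (ε := ε)]; exact map_smul ival t _

/-- A retract of an interval representation is everything. -/
theorem retract_eq {a b c d : ℕ} (hab : 1 ≤ a ∧ a ≤ b ∧ b ≤ n + 2)
    (hcd : 1 ≤ c ∧ c ≤ d ∧ d ≤ n + 2)
    (h : (intervalRep k n ε a b).Hom (intervalRep k n ε c d))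
    (g : (intervalRep k n ε c d).Hom (intervalRep k n ε a b))
    (hg : ∀ x v, g.app x (h.app x v) = v) : a = c ∧ b = d := by
  have hc : ∀ x, SuppCond n a b x → coef h x ≠ 0 ∧ coef g x ≠ 0 := by
    intro x hx
    have := congrArg ival (hg x (ione hx))
    rw [coef_spec, coef_spec, ival_ione] at this
    have h1 : (1 : k) * coef h x * coef g x = 1 := this
    constructor
    · intro h0; simp [h0] at h1
    · intro h0; simp [h0] at h1
  have sa : SuppCond n a b a := by unfold SuppCond; omega
  have sb : SuppCond n a b b := by unfold SuppCond; omega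
  have ta : SuppCond n c d a := by
    by_contra hh; exact (hc a sa).1 (coef_right h a hh)
  have tb : SuppCond n c d b := by
    by_contra hh; exact (hc b sb).1 (coef_right h b hh)
  obtain ⟨_, _, c3, c4, c5, c6⟩ := can_of_coef h (by omega) (by omega) a (hc a sa).1
  obtain ⟨_, _, g3, g4, g5, g6⟩ := can_of_coef g (by omega) (by omega) a (hc a sa).2
  unfold SuppCond at ta tb
  constructor
  · by_contra hne
    have h1 := c5 (by omega)
    have h2 := g6 (by omega)
    simp [h1] at h2
  · by_contra hne
    have h1 := c3 (by omega)
    have h2 := g4 (by omega)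
    simp [h1] at h2

/-- Combinatorial classification of irreducible morphisms between intervals. -/
theorem core {a b c d : ℕ} (hab : 1 ≤ a ∧ a ≤ b ∧ b ≤ n + 2)
    (hcd : 1 ≤ c ∧ c ≤ d ∧ d ≤ n + 2)
    (f : (intervalRep k n ε a b).Hom (intervalRep k n ε c d)) (hf : f.Irred) :
    (c = a ∧ b < d ∧ ε b = false ∧ IsHook n ε b (b + 1) d) ∨
    (d = b ∧ c < a ∧ ε (a - 1) = true ∧ IsHook n ε (a - 1) c (a - 1)) ∨
    (a = c ∧ d < b ∧ ε d = true ∧ IsCohook n ε d (d + 1) b) ∨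
    (b = d ∧ a < c ∧ ε (c - 1) = false ∧ IsCohook n ε (c - 1) a (c - 1)) := by
  obtain ⟨hs, hr, hfac⟩ := hf
  -- the map is nonzero
  have hnz : ∃ x, coef f x ≠ 0 := by
    by_contra hcon
    push Not at hcon
    let z1 : (intervalRep k n ε a b).Hom (zeroRep k n ε) :=
      ⟨fun _ => 0, fun _ _ => by simp, fun _ _ => by simp⟩
    let z2 : (zeroRep k n ε).Hom (intervalRep k n ε c d) :=
      ⟨fun _ => 0, fun _ _ => by simp, fun _ _ => by simp⟩
    have := hfac _ z1 z2 (by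
      intro x v
      apply ival_inj
      rw [coef_spec, hcon x, mul_zero]
      exact (map_zero ival).symm)
    rcases this with ⟨g, hg⟩ | ⟨g, hg⟩
    · have hx : SuppCond n a b a := by unfold SuppCond; omega
      have := congrArg ival (hg a (ione hx))
      rw [show z1.app a (ione hx) = 0 from rfl, map_zero, map_zero, ival_ione] at this
      exact zero_ne_one this
    · have hx : SuppCond n c d c := by unfold SuppCond; omega
      have := congrArg ival (hg c (ione hx))
      rw [show z2.app c (g.app c (ione hx)) = 0 from rfl, map_zero, ival_ione] at this
      exact zero_ne_one this
  obtain ⟨x0, hx0⟩ := hnz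
  have hcan := can_of_coef f (by omega) (by omega) x0 hx0
  have s1 : SuppCond n a b x0 := by
    by_contra h; exact hx0 (coef_left f x0 h)
  have s2 : SuppCond n c d x0 := by
    by_contra h; exact hx0 (coef_right f x0 h)
  have hfx : ∀ x (v : (intervalRep k n ε a b).V x),
      ival (f.app x v) = coef f x0 * if SuppCond n c d x then ival v else 0 := by
    intro x v
    rw [coef_spec]
    by_cases h1 : SuppCond n a b x
    · by_cases h2 : SuppCond n c d x
      · rw [coef_const' f x x0 ⟨h1, h2⟩ ⟨s1, s2⟩, if_pos h2, mul_comm]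
      · rw [coef_right f x h2]; simp [h2]
    · rw [int_zero h1 v]; simp
  -- not an isomorphism
  have hne : ¬(a = c ∧ b = d) := by
    rintro ⟨rfl, rfl⟩
    apply hs
    refine ⟨canHom k n (ε := ε) hcan (coef f x0)⁻¹, ?_⟩
    intro x v
    apply ival_inj
    rw [canHom_coe, hfx]
    by_cases h1 : SuppCond n a b x
    · simp only [if_pos h1]
      rw [inv_mul_cancel_left₀ hx0]
    · rw [int_zero h1 v]; simp
  have mid : ∀ p q, 1 ≤ p → p ≤ q → q ≤ n + 2 → Can ε a b p q → Can ε p q c d →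
      (∀ x, a ≤ x → x ≤ b → c ≤ x → x ≤ d → p ≤ x ∧ x ≤ q) →
      (a = p ∧ b = q) ∨ (c = p ∧ d = q) := by
    intro p q hp hpq hq c1 c2 hI
    rcases hfac _ (canHom k n c1 1) (canHom k n c2 (coef f x0)) (by
      intro x v
      apply ival_inj
      rw [hfx, canHom_coe, canHom_coe]
      by_cases h1 : SuppCond n a b x
      · by_cases h2 : SuppCond n c d x
        · have h3 : SuppCond n p q x := by
            have := hI x h1.1 h1.2.1 h2.1 h2.2.1
            unfold SuppCond at *; omega
          simp [h2, h3]
        · simp [h2]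
      · rw [int_zero h1 v]; simp) with ⟨g, hg⟩ | ⟨g, hg⟩
    · left; exact retract_eq hab (by omega) _ g hg
    · right; exact retract_eq hcd (by omega) g _ hg
  have hbool : ∀ y, (ε y = true → False) → ε y = false := by
    intro y; cases ε y <;> simp
  have hbool' : ∀ y, (ε y = false → False) → ε y = true := by
    intro y; cases ε y <;> simp
  clear hfx hfac hs hr
  unfold SuppCond at s1 s2
  obtain ⟨c1, c2, c3, c4, c5, c6⟩ := hcan
  have hcont : (c ≤ a ∧ b ≤ d) ∨ (a ≤ c ∧ d ≤ b) := by
    by_contra hcon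
    rcases Nat.lt_or_ge a c with h | h
    · have : b < d := by omega
      have := mid c b (by omega) (by omega) (by omega)
        ⟨by omega, by omega, by omega, by omega, by omega, c6⟩
        ⟨by omega, by omega, c3, by omega, by omega, by omega⟩ (by omega)
      omega
    · have : d < b := by omega
      have := mid a d (by omega) (by omega) (by omega)
        ⟨by omega, by omega, by omega, c4, by omega, by omega⟩
        ⟨by omega, by omega, by omega, by omega, c5, by omega⟩ (by omega)
      omega
  rcases hcont with hc | hc
  · have := mid c b (by omega) (by omega) (by omega)
      ⟨by omega, by omega, by omega, by omega, c5, by omega⟩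
      ⟨by omega, by omega, c3, by omega, by omega, by omega⟩ (by omega)
    rcases this with h | h
    · left
      have hbd : b < d := by omega
      have heb := c3 hbd
      refine ⟨h.1.symm, hbd, heb, ?_⟩
      unfold IsHook
      rw [if_neg (by simp [heb])]
      refine ⟨rfl, hbd, by omega, ?_, ?_⟩
      · intro x hx1 hx2
        refine hbool' _ fun he => ?_
        have := mid a x (by omega) (by omega) (by omega)
          ⟨by omega, by omega, fun _ => heb, by omega, by omega, by omega⟩
          ⟨by omega, by omega, fun _ => he, by omega, by omega, by omega⟩ (by omega)
        omega
      · by_contra hcon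
        push Not at hcon
        have := mid a (d + 1) (by omega) (by omega) (by omega)
          ⟨by omega, by omega, fun _ => heb, by omega, by omega, by omega⟩
          ⟨by omega, by omega, by omega, fun _ => hbool' _ hcon.2, by omega, by omega⟩ (by omega)
        omega
    · right; left
      have hca : c < a := by omega
      have hea := c5 hca
      refine ⟨h.2, hca, hea, ?_⟩
      unfold IsHook
      rw [if_pos hea]
      refine ⟨rfl, by omega, by omega, ?_, ?_⟩
      · intro x hx1 hx2
        refine hbool _ fun he => ?_
        have := mid (x + 1) b (by omega) (by omega) (by omega)
          ⟨by omega, by omega, by omega, by omega, fun _ => hea, by omega⟩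
          ⟨by omega, by omega, by omega, by omega, fun _ => he, by omega⟩ (by omega)
        omega
      · by_contra hcon
        push Not at hcon
        have := mid (c - 1) b (by omega) (by omega) (by omega)
          ⟨by omega, by omega, by omega, by omega, fun _ => hea, by omega⟩
          ⟨by omega, by omega, by omega, by omega, by omega,
            fun _ => hbool _ hcon.2⟩ (by omega)
        omega
  · have := mid a d (by omega) (by omega) (by omega)
      ⟨by omega, by omega, by omega, c4, by omega, by omega⟩
      ⟨by omega, by omega, by omega, by omega, by omega, c6⟩ (by omega)
    rcases this with h | h
    · right; right; right
      have hac : a < c := by omega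
      have hec := c6 hac
      refine ⟨h.2, hac, hec, ?_⟩
      unfold IsCohook
      rw [if_neg (by simp [hec])]
      refine ⟨rfl, by omega, by omega, ?_, ?_⟩
      · intro x hx1 hx2
        refine hbool' _ fun he => ?_
        have := mid (x + 1) d (by omega) (by omega) (by omega)
          ⟨by omega, by omega, by omega, by omega, by omega, fun _ => he⟩
          ⟨by omega, by omega, by omega, by omega, by omega, fun _ => hec⟩ (by omega)
        omega
      · by_contra hcon
        push Not at hcon
        have := mid (a - 1) d (by omega) (by omega) (by omega)
          ⟨by omega, by omega, by omega, by omega, fun _ => hbool' _ hcon.2, by omega⟩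
          ⟨by omega, by omega, by omega, by omega, by omega, fun _ => hec⟩ (by omega)
        omega
    · right; right; left
      have hdb : d < b := by omega
      have hed := c4 hdb
      refine ⟨h.1.symm, hdb, hed, ?_⟩
      unfold IsCohook
      rw [if_pos hed]
      refine ⟨rfl, by omega, by omega, ?_, ?_⟩
      · intro x hx1 hx2
        refine hbool _ fun he => ?_
        have := mid a x (by omega) (by omega) (by omega)
          ⟨by omega, by omega, by omega, fun _ => he, by omega, by omega⟩
          ⟨by omega, by omega, by omega, fun _ => hed, by omega, by omega⟩ (by omega)
        omega
      · by_contra hcon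
        push Not at hcon
        have := mid a (b + 1) (by omega) (by omega) (by omega)
          ⟨by omega, by omega, fun _ => hbool _ hcon.2, by omega, by omega, by omega⟩
          ⟨by omega, by omega, by omega, fun _ => hed, by omega, by omega⟩ (by omega)
        omega

/-! ### Transport along isomorphisms -/

theorem iso_inv {M N : ARep k n ε} (h : M.Iso N) : ∃ (f : M.Hom N) (g : N.Hom M),
    (∀ x v, g.app x (f.app x v) = v) ∧ (∀ x v, f.app x (g.app x v) = v) := by
  obtain ⟨f, hf⟩ := h
  let e : ∀ x, M.V x ≃ₗ[k] N.V x := fun x => LinearEquiv.ofBijective (f.app x) (hf x)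
  have he : ∀ x v, e x v = f.app x v := fun x v => rfl
  refine ⟨f, ⟨fun x => (e x).symm.toLinearMap, ?_, ?_⟩, ?_, ?_⟩
  · intro i v
    apply (e (i + 1)).injective
    obtain ⟨w, rfl⟩ := (e i).surjective v
    simp only [LinearEquiv.coe_coe, LinearEquiv.apply_symm_apply, LinearEquiv.symm_apply_apply]
    rw [he, he, f.comm_fwd]
  · intro i v
    apply (e i).injective
    obtain ⟨w, rfl⟩ := (e (i + 1)).surjective v
    simp only [LinearEquiv.coe_coe, LinearEquiv.apply_symm_apply, LinearEquiv.symm_apply_apply]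
    rw [he, he, f.comm_bwd]
  · intro x v; exact (e x).symm_apply_apply v
  · intro x v; exact (e x).apply_symm_apply v

theorem iso_refl (M : ARep k n ε) : M.Iso M :=
  ⟨ARep.Hom.id M, fun _ => Function.bijective_id⟩

theorem irred_transport {X Y X' Y' : ARep k n ε} (hX : X.Iso X') (hY : Y.Iso Y') (f : X.Hom Y)
    (hf : f.Irred) : ∃ f' : X'.Hom Y', f'.Irred := by
  obtain ⟨α, α', h1, h2⟩ := iso_inv hX
  obtain ⟨β, β', h3, h4⟩ := iso_inv hY
  obtain ⟨hs, hr, hfac⟩ := hf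
  refine ⟨β.comp (f.comp α'), ?_, ?_, ?_⟩
  · rintro ⟨g, hg⟩
    refine hs ⟨α'.comp (g.comp β), fun x v => ?_⟩
    have := hg x (α.app x v)
    simp only [ARep.Hom.comp, LinearMap.comp_apply, h1] at this ⊢
    rw [this, h1]
  · rintro ⟨g, hg⟩
    refine hr ⟨α'.comp (g.comp β), fun x v => ?_⟩
    have := hg x (β.app x v)
    simp only [ARep.Hom.comp, LinearMap.comp_apply] at this ⊢
    rw [← h3 x (f.app x _), this, h3]
  · intro Z h g hgh
    rcases hfac Z (h.comp α) (β'.comp g) (by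
      intro x v
      have := hgh x (α.app x v)
      simp only [ARep.Hom.comp, LinearMap.comp_apply, h1] at this ⊢
      rw [← this, h3]) with ⟨s, hs⟩ | ⟨s, hs⟩
    · left
      refine ⟨α.comp s, fun x v => ?_⟩
      have := hs x (α'.app x v)
      simp only [ARep.Hom.comp, LinearMap.comp_apply, h2] at this ⊢
      rw [this, h2]
    · right
      refine ⟨s.comp β', fun x v => ?_⟩
      have := hs x (β'.app x v)
      simp only [ARep.Hom.comp, LinearMap.comp_apply] at this ⊢
      rw [← h4 x (g.app x _), this, h4]

theorem supp_of_iso {N : ARep k n ε} {c d : ℕ} (hcd : 1 ≤ c ∧ d ≤ n + 2)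
    (h : N.Iso (intervalRep k n ε c d)) : N.supp = Set.Icc c d := by
  obtain ⟨f, g, h1, h2⟩ := iso_inv h
  ext x
  constructor
  · rintro ⟨v, hv⟩
    by_contra hx
    have hn : ¬SuppCond n c d x := by
      intro hh; exact hx ⟨hh.1, hh.2.1⟩
    apply hv
    rw [← h1 x v, int_zero hn (f.app x v), map_zero]
  · rintro ⟨hx1, hx2⟩
    have hh : SuppCond n c d x := by unfold SuppCond; omega
    refine ⟨g.app x (ione hh), fun h0 => ?_⟩
    have := congrArg ival (h2 x (ione hh))
    rw [h0, map_zero, map_zero, ival_ione] at this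
    exact zero_ne_one this

end Helpers

/-- classification of irreducible morphisms into/out of `M(i,j)` via hooks
and cohooks, and the fact that all irreducible morphisms between indecomposables are of
this form. -/
theorem stmt_6 (k : Type) [Field k] (n : ℕ) (ε : ℕ → Bool) (i j : ℕ)
    (h1 : 1 ≤ i) (h2 : i ≤ j) (h3 : j ≤ n + 2)
    (N : ARep k n ε) (hN : N.Indec) (hsupp : Set.Icc i j ⊂ N.supp) :
    ((∃ f : (intervalRep k n ε i j).Hom N, f.Irred) →
      ((∃ ℓ, j + 1 ≤ n + 2 ∧ ε j = false ∧ IsHook n ε j (j + 1) ℓ ∧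
          N.Iso (intervalRep k n ε i ℓ)) ∨
       (∃ h, 2 ≤ i ∧ ε (i - 1) = true ∧ IsHook n ε (i - 1) h (i - 1) ∧
          N.Iso (intervalRep k n ε h j)))) ∧
    ((∃ f : N.Hom (intervalRep k n ε i j), f.Irred) →
      ((∃ ℓ, j + 1 ≤ n + 2 ∧ ε j = true ∧ IsCohook n ε j (j + 1) ℓ ∧
          N.Iso (intervalRep k n ε i ℓ)) ∨
       (∃ h, 2 ≤ i ∧ ε (i - 1) = false ∧ IsCohook n ε (i - 1) h (i - 1) ∧
          N.Iso (intervalRep k n ε h j)))) ∧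
    (∀ (X Y : ARep k n ε), X.Indec → Y.Indec → ∀ f : X.Hom Y, f.Irred →
      ∃ i' j', 1 ≤ i' ∧ i' ≤ j' ∧ j' ≤ n + 2 ∧
        ((X.Iso (intervalRep k n ε i' j') ∧
           ((∃ ℓ, j' + 1 ≤ n + 2 ∧ ε j' = false ∧ IsHook n ε j' (j' + 1) ℓ ∧
               Y.Iso (intervalRep k n ε i' ℓ)) ∨
            (∃ h, 2 ≤ i' ∧ ε (i' - 1) = true ∧ IsHook n ε (i' - 1) h (i' - 1) ∧
               Y.Iso (intervalRep k n ε h j')))) ∨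
         (Y.Iso (intervalRep k n ε i' j') ∧
           ((∃ ℓ, j' + 1 ≤ n + 2 ∧ ε j' = true ∧ IsCohook n ε j' (j' + 1) ℓ ∧
               X.Iso (intervalRep k n ε i' ℓ)) ∨
            (∃ h, 2 ≤ i' ∧ ε (i' - 1) = false ∧ IsCohook n ε (i' - 1) h (i' - 1) ∧
               X.Iso (intervalRep k n ε h j')))))) := by
  obtain ⟨c, d, hc1, hcd, hd, hiso⟩ := indec_interval N hN
  rw [supp_of_iso ⟨hc1, hd⟩ hiso] at hsupp
  have hsub := (Set.Icc_subset_Icc_iff h2).1 hsupp.subset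
  refine ⟨?_, ?_, ?_⟩
  · rintro ⟨f, hf⟩
    obtain ⟨f', hf'⟩ := irred_transport (iso_refl _) hiso f hf
    rcases core ⟨h1, h2, h3⟩ ⟨hc1, hcd, hd⟩ f' hf' with h | h | h | h
    · obtain ⟨rfl, hlt, he, hh⟩ := h
      exact Or.inl ⟨d, by omega, he, hh, hiso⟩
    · obtain ⟨rfl, hlt, he, hh⟩ := h
      exact Or.inr ⟨c, by omega, he, hh, hiso⟩
    · omega
    · omega
  · rintro ⟨f, hf⟩
    obtain ⟨f', hf'⟩ := irred_transport hiso (iso_refl _) f hf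
    rcases core ⟨hc1, hcd, hd⟩ ⟨h1, h2, h3⟩ f' hf' with h | h | h | h
    · omega
    · omega
    · obtain ⟨rfl, hlt, he, hh⟩ := h
      exact Or.inl ⟨d, by omega, he, hh, hiso⟩
    · obtain ⟨rfl, hlt, he, hh⟩ := h
      exact Or.inr ⟨c, by omega, he, hh, hiso⟩
  · intro X Y hX hY f hf
    obtain ⟨a, b, ha, hab, hb, hXi⟩ := indec_interval X hX
    obtain ⟨p, q, hp, hpq, hq, hYi⟩ := indec_interval Y hY
    obtain ⟨f', hf'⟩ := irred_transport hXi hYi f hf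
    rcases core ⟨ha, hab, hb⟩ ⟨hp, hpq, hq⟩ f' hf' with h | h | h | h
    · obtain ⟨rfl, hlt, he, hh⟩ := h
      exact ⟨p, b, ha, hab, hb, Or.inl ⟨hXi, Or.inl ⟨q, by omega, he, hh, hYi⟩⟩⟩
    · obtain ⟨rfl, hlt, he, hh⟩ := h
      exact ⟨a, q, ha, hab, hb, Or.inl ⟨hXi, Or.inr ⟨p, by omega, he, hh, hYi⟩⟩⟩
    · obtain ⟨rfl, hlt, he, hh⟩ := h
      exact ⟨a, q, hp, hpq, hq, Or.inr ⟨hYi, Or.inl ⟨b, by omega, he, hh, hXi⟩⟩⟩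
    · obtain ⟨rfl, hlt, he, hh⟩ := h
      exact ⟨p, b, hp, hpq, hq, Or.inr ⟨hYi, Or.inr ⟨a, by omega, he, hh, hXi⟩⟩⟩

end CambrianA
end
end
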